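/- arXiv:1804.08174 — 2 statements merged into one kernel-verified Lean document; each statement's English description precedes it below -/
import Mathlib

section
/- Let M be an n×n row-stochastic matrix satisfying M_{ij} > 0 ⟺ M_{ji} > 0 for all i, j, with stationary probability distribution π with π_i > 0 for all i. If the chain is started at stationarity, p(0) = π, then for every t ≥ 1 the relative entropy of the path measure with respect to its time-reversal is exactly linear in t: Σ_{i_0,…,i_t : π_{i_0} M_{i_0 i_1}⋯M_{i_{t−1} i_t} > 0} π_{i_0} M_{i_0 i_1}⋯M_{i_{t−1} i_t} · log( π_{i_0} M_{i_0 i_1}⋯M_{i_{t−1} i_t} / ( π_{i_t} M_{i_t i_{t−1}}⋯M_{i_1 i_0} ) ) = t · Σ_{(i,j): M_{ij}>0} π_i M_{ij} log( M_{ij} / M_{ji} ). -/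
open Finset

/-!
On a path `ω` of positive weight the logarithm of the forward-to-backward ratio splits as
`log π(ω₀) - log π(ω_t) + ∑ₛ log (M(ωₛ, ωₛ₊₁) / M(ωₛ₊₁, ωₛ))`. Under the stationary path measure
every `ωₛ` has law `π`, so the two boundary terms cancel in the mean, and every step `(ωₛ, ωₛ₊₁)`
has law `π i * M i j`, so each of the `t` steps contributes the same amount.
-/

open scoped Matrix

section Weight

variable {ι R : Type*} [CommMonoid R] {t : ℕ}

/-- The path measure: the weight of the trajectory `ω` of the Markov chain with transition matrix
`M` and initial weights `π`. A trajectory with `t` steps is encoded by its `t + 1` states, so the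
weight of the time-reversed trajectory is `pathWeight M π (ω ∘ Fin.rev)`. -/
def pathWeight (M : Matrix ι ι R) (π : ι → R) (ω : Fin (t + 1) → ι) : R :=
  π (ω 0) * ∏ s : Fin t, M (ω s.castSucc) (ω s.succ)

lemma pathWeight_comp_rev (M : Matrix ι ι R) (π : ι → R) (ω : Fin (t + 1) → ι) :
    pathWeight M π (ω ∘ Fin.rev) =
      π (ω (Fin.last t)) * ∏ s : Fin t, M (ω s.succ) (ω s.castSucc) := by
  simp only [pathWeight, Function.comp_apply, Fin.rev_zero, Fin.rev_castSucc, Fin.rev_succ]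
  exact congrArg _ (Equiv.prod_comp Fin.revPerm fun s : Fin t => M (ω s.succ) (ω s.castSucc))

lemma pathWeight_snoc (M : Matrix ι ι R) (π : ι → R) (ω : Fin (t + 1) → ι) (j : ι) :
    pathWeight M π (Fin.snoc ω j : Fin (t + 2) → ι) =
      pathWeight M π ω * M (ω (Fin.last t)) j := by
  simp only [pathWeight, Fin.prod_univ_castSucc (n := t), Fin.snoc_apply_zero, Fin.succ_castSucc,
    Fin.succ_last, Fin.snoc_castSucc, Fin.snoc_last, mul_assoc]

end Weight

section Marginals

lemma sum_tuple_succ_eq_sum_snoc {ι A : Type*} [Fintype ι] [AddCommMonoid A] {t : ℕ}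
    (F : (Fin (t + 1) → ι) → A) : ∑ ω, F ω = ∑ ω : Fin t → ι, ∑ j, F (Fin.snoc ω j) := by
  rw [← (Fin.snocEquiv fun _ : Fin (t + 1) => ι).sum_comp, Fintype.sum_prod_type_right]
  rfl

variable {ι R : Type*} [Fintype ι] [CommSemiring R] {t : ℕ}

lemma sum_pathWeight_succ_mul (M : Matrix ι ι R) (π : ι → R) (F : (Fin (t + 2) → ι) → R) :
    ∑ ω, pathWeight M π ω * F ω =
      ∑ ω : Fin (t + 1) → ι,
        pathWeight M π ω * ∑ j, M (ω (Fin.last t)) j * F (Fin.snoc ω j) := by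
  simp only [sum_tuple_succ_eq_sum_snoc, pathWeight_snoc, mul_assoc, mul_sum]

variable {M : Matrix ι ι R} {π : ι → R}

lemma sum_pathWeight_mul_init (hM : ∀ i, ∑ j, M i j = 1) (F : (Fin (t + 1) → ι) → R) :
    ∑ ω : Fin (t + 2) → ι, pathWeight M π ω * F (Fin.init ω) = ∑ ω, pathWeight M π ω * F ω := by
  simp only [sum_pathWeight_succ_mul, Fin.init_snoc, ← sum_mul, hM, one_mul]

lemma sum_pathWeight_mul_apply (hM : ∀ i, ∑ j, M i j = 1) (hπ : π ᵥ* M = π) (s : Fin (t + 1))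
    (f : ι → R) : ∑ ω, pathWeight M π ω * f (ω s) = ∑ i, π i * f i := by
  induction t generalizing f with
  | zero =>
    rw [← (Equiv.funUnique (Fin 1) ι).symm.sum_comp]
    simp [pathWeight, Fin.eq_zero s]
  | succ t ih =>
    cases s using Fin.lastCases with
    | last =>
      calc ∑ ω, pathWeight M π ω * f (ω (Fin.last (t + 1)))
          = ∑ ω : Fin (t + 1) → ι, pathWeight M π ω * (M *ᵥ f) (ω (Fin.last t)) := by
            simp only [sum_pathWeight_succ_mul, Fin.snoc_last, Matrix.mulVec, dotProduct]
        _ = π ⬝ᵥ M *ᵥ f := ih (Fin.last t) (M *ᵥ f)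
        _ = π ⬝ᵥ f := by rw [Matrix.dotProduct_mulVec, hπ]
    | cast s => exact (sum_pathWeight_mul_init hM fun ω => f (ω s)).trans (ih s f)

lemma sum_pathWeight_mul_step (hM : ∀ i, ∑ j, M i j = 1) (hπ : π ᵥ* M = π) (s : Fin t)
    (g : ι → ι → R) :
    ∑ ω, pathWeight M π ω * g (ω s.castSucc) (ω s.succ) = ∑ i, ∑ j, π i * M i j * g i j := by
  induction t with
  | zero => exact s.elim0
  | succ t ih =>
    cases s using Fin.lastCases with
    | last =>
      simp only [sum_pathWeight_succ_mul, Fin.succ_last, Fin.snoc_castSucc, Fin.snoc_last,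
        mul_assoc, ← mul_sum]
      exact sum_pathWeight_mul_apply hM hπ (Fin.last t) fun i => ∑ j, M i j * g i j
    | cast s =>
      exact (sum_pathWeight_mul_init hM fun ω => g (ω s.castSucc) (ω s.succ)).trans (ih s)

lemma sum_pathWeight_mul_sum_steps (hM : ∀ i, ∑ j, M i j = 1) (hπ : π ᵥ* M = π)
    (g : ι → ι → R) :
    ∑ ω, pathWeight M π ω * ∑ s : Fin t, g (ω s.castSucc) (ω s.succ) =
      t * ∑ i, ∑ j, π i * M i j * g i j := by
  simp only [mul_sum (s := (univ : Finset (Fin t)))]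
  rw [sum_comm]
  simp only [sum_pathWeight_mul_step hM hπ, sum_const, card_univ, Fintype.card_fin,
    nsmul_eq_mul]

end Marginals

section Positivity

variable {ι R : Type*} [CommSemiring R] [PartialOrder R] {M : Matrix ι ι R} {π : ι → R} {t : ℕ}

lemma pathWeight_nonneg [IsOrderedRing R] (hM : ∀ i j, 0 ≤ M i j) (hπ : ∀ i, 0 ≤ π i)
    (ω : Fin (t + 1) → ι) : 0 ≤ pathWeight M π ω :=
  mul_nonneg (hπ _) (prod_nonneg fun _ _ => hM _ _)

lemma pos_of_stationary_of_step [Fintype ι] [IsStrictOrderedRing R]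
    (hM : ∀ i j, 0 ≤ M i j) (hπ : ∀ i, 0 ≤ π i) (hstat : π ᵥ* M = π) {i j : ι}
    (hi : 0 < π i) (hij : 0 < M i j) : 0 < π j :=
  calc 0 < π i * M i j := mul_pos hi hij
    _ ≤ (π ᵥ* M) j :=
      single_le_sum (f := fun k => π k * M k j) (fun k _ => mul_nonneg (hπ k) (hM k j))
        (mem_univ i)
    _ = π j := by rw [hstat]

lemma pathWeight_comp_rev_pos [Fintype ι] [IsStrictOrderedRing R]
    (hM : ∀ i j, 0 ≤ M i j) (hsymm : ∀ i j, 0 < M i j → 0 < M j i) (hπ : ∀ i, 0 ≤ π i)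
    (hstat : π ᵥ* M = π) {ω : Fin (t + 1) → ι} (hω : 0 < pathWeight M π ω) :
    0 < pathWeight M π (ω ∘ Fin.rev) := by
  have start_pos : 0 < π (ω 0) := (hπ _).lt_of_ne' (left_ne_zero_of_mul hω.ne')
  have step_pos (s : Fin t) : 0 < M (ω s.castSucc) (ω s.succ) :=
    (hM _ _).lt_of_ne' fun hs => right_ne_zero_of_mul hω.ne' (prod_eq_zero (mem_univ s) hs)
  have state_pos (s : Fin (t + 1)) : 0 < π (ω s) :=
    Fin.induction start_pos
      (fun s hs => pos_of_stationary_of_step hM hπ hstat hs (step_pos s)) s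
  rw [pathWeight_comp_rev]
  exact mul_pos (state_pos _) (prod_pos fun s _ => hsymm _ _ (step_pos s))

end Positivity

lemma log_pathWeight_div_comp_rev {ι : Type*} {M : Matrix ι ι ℝ} {π : ι → ℝ} {t : ℕ}
    {ω : Fin (t + 1) → ι} (hω : pathWeight M π ω ≠ 0)
    (hrev : pathWeight M π (ω ∘ Fin.rev) ≠ 0) :
    Real.log (pathWeight M π ω / pathWeight M π (ω ∘ Fin.rev)) =
      Real.log (π (ω 0)) - Real.log (π (ω (Fin.last t))) +
        ∑ s : Fin t, Real.log (M (ω s.castSucc) (ω s.succ) / M (ω s.succ) (ω s.castSucc)) := by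
  have hdiv := div_ne_zero hω hrev
  rw [pathWeight_comp_rev] at hrev hdiv ⊢
  rw [pathWeight, mul_div_mul_comm, ← prod_div_distrib] at hdiv ⊢
  rw [Real.log_mul (left_ne_zero_of_mul hdiv) (right_ne_zero_of_mul hdiv),
    Real.log_div (left_ne_zero_of_mul hω) (left_ne_zero_of_mul hrev),
    Real.log_prod (prod_ne_zero_iff.mp (right_ne_zero_of_mul hdiv))]

theorem stationary_path_relative_entropy_linear_general {ι : Type*} [Fintype ι]
    (M : Matrix ι ι ℝ) (hM0 : ∀ i j, 0 ≤ M i j) (hM1 : ∀ i, ∑ j, M i j = 1)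
    (hsymm : ∀ i j, 0 < M i j → 0 < M j i) (π : ι → ℝ) (hπ : ∀ i, 0 ≤ π i) (hstat : π ᵥ* M = π)
    (t : ℕ) :
    (∑ ω : Fin (t + 1) → ι, if 0 < pathWeight M π ω then
        pathWeight M π ω * Real.log (pathWeight M π ω / pathWeight M π (ω ∘ Fin.rev)) else 0) =
      t * ∑ i, ∑ j, if 0 < M i j then π i * M i j * Real.log (M i j / M j i) else 0 := by
  have path_term (ω : Fin (t + 1) → ι) : (if 0 < pathWeight M π ω then
        pathWeight M π ω * Real.log (pathWeight M π ω / pathWeight M π (ω ∘ Fin.rev)) else 0) =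
      pathWeight M π ω * Real.log (π (ω 0)) - pathWeight M π ω * Real.log (π (ω (Fin.last t))) +
        pathWeight M π ω *
          ∑ s : Fin t, Real.log (M (ω s.castSucc) (ω s.succ) / M (ω s.succ) (ω s.castSucc)) := by
    split_ifs with hω
    · rw [log_pathWeight_div_comp_rev hω.ne'
        (pathWeight_comp_rev_pos hM0 hsymm hπ hstat hω).ne', mul_add, mul_sub]
    · simp [(pathWeight_nonneg hM0 hπ ω).antisymm' (not_lt.mp hω)]
  have step_term (i j : ι) :
      (if 0 < M i j then π i * M i j * Real.log (M i j / M j i) else 0) =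
        π i * M i j * Real.log (M i j / M j i) := by
    split_ifs with hij
    · rfl
    · simp [(hM0 i j).antisymm' (not_lt.mp hij)]
  simp only [path_term, step_term, sum_add_distrib, sum_sub_distrib]
  rw [sum_pathWeight_mul_apply hM1 hstat 0 fun i => Real.log (π i),
    sum_pathWeight_mul_apply hM1 hstat (Fin.last t) fun i => Real.log (π i), sub_self, zero_add,
    sum_pathWeight_mul_sum_steps hM1 hstat fun i j => Real.log (M i j / M j i)]

/-- At stationarity, the relative entropy of the path measure with respect to its time
reversal is exactly linear in t, with slope the entropy production rate. -/
theorem stationary_path_relative_entropy_linear (n : ℕ)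
    (M : Matrix (Fin n) (Fin n) ℝ)
    (hM0 : ∀ i j, 0 ≤ M i j) (hM1 : ∀ i, ∑ j, M i j = 1)
    (hsym : ∀ i j, 0 < M i j ↔ 0 < M j i)
    (π : Fin n → ℝ) (hπpos : ∀ i, 0 < π i) (hπ1 : ∑ i, π i = 1)
    (hπstat : ∀ j, ∑ i, π i * M i j = π j)
    (w wrev : (t : ℕ) → (Fin (t + 1) → Fin n) → ℝ)
    (hw : ∀ t ω, w t ω = π (ω 0) * ∏ s : Fin t, M (ω s.castSucc) (ω s.succ))
    (hwrev : ∀ t ω, wrev t ω =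
      π (ω (Fin.last t)) * ∏ s : Fin t, M (ω s.succ) (ω s.castSucc)) :
    ∀ t : ℕ, 1 ≤ t →
      (∑ ω : Fin (t + 1) → Fin n,
        if 0 < w t ω then w t ω * Real.log (w t ω / wrev t ω) else 0)
      = (t : ℝ) * ∑ i, ∑ j,
          if 0 < M i j then π i * M i j * Real.log (M i j / M j i) else 0 := by
  intro t _
  simp only [show ∀ ω, w t ω = pathWeight M π ω from hw t,
    fun ω => (hwrev t ω).trans (pathWeight_comp_rev M π ω).symm]
  exact stationary_path_relative_entropy_linear_general M hM0 hM1 (fun i j => (hsym i j).mp) π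
    (fun i => (hπpos i).le) (funext hπstat) t
end

section
/- Let M be an irreducible n×n row-stochastic matrix with stationary distribution π, and let Q be the maximum entropy RDS measure on maps α : {1,…,n} → {1,…,n}, Q(α) = Π_i M_{i, α(i)}. Then for every state i, Σ_{cycles c = (S,σ) with i ∈ S} w_c = π_i, where w_c = Q(α : A(α) = c) / E_Q[‖A(α)‖]; equivalently, Q(α : α has a single attractor and i ∈ Per(α)) = π_i · E_Q[‖A(α)‖]. -/
open Finset
open scoped Classical

/-! Split the maps according to the point `i` of the attractor: the maps with a single attractor
through `i` are the spanning trees rooted at `i` together with an arbitrary edge `i ⟶ j`, so they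
have total mass `T i`, the tree weight of `i`, and `E_Q[‖A(α)‖] = ∑ i, T i`.

* `T` is stationary: a map with a single attractor through `j` has exactly one edge into `j` that
  starts on the attractor, so such maps are counted both by `T j` and by `∑ i, T i * M i j`.
* Stationarity applied to `M` with row `i` replaced by `e_j`, which does not change `T i`, and
  paired with a harmonic `h`, gives `T i * (h j - h i) = 0`. Hence either `T` vanishes or all
  harmonic functions are constant, and in both cases `T = (∑ i, T i) • π`. -/

open Function
open scoped Matrix

section GlobalAttractor

variable {X : Type*} {f g : X → X} {i j x : X}

/-- `f` has a single attractor and `i` lies on it (see `reachedByAll_iff`). In this form the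
condition depends only on the values of `f` away from `i`. -/
def ReachedByAll (f : X → X) (i : X) : Prop := ∀ x, ∃ k, f^[k] x = i

lemma ReachedByAll.mem_periodicPts (h : ReachedByAll f i) : i ∈ periodicPts f := by
  obtain ⟨k, hk⟩ := h (f i)
  exact mk_mem_periodicPts k.succ_pos (by rwa [IsPeriodicPt, IsFixedPt, iterate_succ_apply])

lemma ReachedByAll.iterate (h : ReachedByAll f i) (k : ℕ) : ReachedByAll f (f^[k] i) := fun x ↦ by
  obtain ⟨l, hl⟩ := h x
  exact ⟨k + l, by rw [iterate_add_apply, hl]⟩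

lemma reachedByAll_iff_existsUnique_apply_eq :
    ReachedByAll f j ↔ ∃! i, ReachedByAll f i ∧ f i = j := by
  constructor
  · intro hj
    obtain ⟨k, hk⟩ := hj (f j)
    refine ⟨f^[k] j, ⟨hj.iterate k, by rw [← iterate_succ_apply' f, iterate_succ_apply, hk]⟩, ?_⟩
    rintro i ⟨hi, rfl⟩
    refine (bijOn_periodicPts f).injOn hi.mem_periodicPts (hj.iterate k).mem_periodicPts ?_
    rw [← iterate_succ_apply' f, iterate_succ_apply, hk]
  · rintro ⟨i, ⟨hi, rfl⟩, -⟩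
    exact hi.iterate 1

lemma exists_iterate_iterate_eq_of_mem_periodicPts (hx : x ∈ periodicPts f) (k : ℕ) :
    ∃ l, f^[l] (f^[k] x) = x := by
  have hkx : f^[k] x ∈ periodicPts f := (bijOn_periodicPts f).mapsTo.iterate k hx
  rw [← mem_periodicOrbit_iff hkx, periodicOrbit_apply_iterate_eq hx]
  exact self_mem_periodicOrbit hx

lemma exists_iterate_mem_periodicPts [Finite X] (f : X → X) (x : X) :
    ∃ k, f^[k] x ∈ periodicPts f := by
  obtain ⟨k, l, hkl, h⟩ := Set.finite_univ.exists_lt_map_eq_of_forall_mem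
    (f := fun k : ℕ ↦ f^[k] x) fun _ ↦ Set.mem_univ _
  refine ⟨k, mk_mem_periodicPts (Nat.sub_pos_of_lt hkl) ?_⟩
  rw [IsPeriodicPt, IsFixedPt, ← iterate_add_apply, Nat.sub_add_cancel hkl.le, h]

lemma reachedByAll_iff [Finite X] :
    ReachedByAll f i ↔
      (∀ x ∈ periodicPts f, ∀ y ∈ periodicPts f, ∃ k, f^[k] x = y) ∧ i ∈ periodicPts f := by
  constructor
  · refine fun h ↦ ⟨fun x _ y hy ↦ ?_, h.mem_periodicPts⟩
    obtain ⟨k, hk⟩ := h x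
    obtain ⟨l, rfl⟩ := h y
    obtain ⟨m, hm⟩ := exists_iterate_iterate_eq_of_mem_periodicPts hy l
    exact ⟨m + k, by rw [iterate_add_apply, hk, hm]⟩
  · rintro ⟨htrans, hi⟩ x
    obtain ⟨k, hk⟩ := exists_iterate_mem_periodicPts f x
    obtain ⟨l, hl⟩ := htrans _ hk i hi
    exact ⟨l + k, by rw [iterate_add_apply, hl]⟩

lemma reachedByAll_of_descent (d : X → ℕ) (hd : ∀ x ≠ i, d (f x) < d x) : ReachedByAll f i := by
  intro x
  induction hn : d x using Nat.strong_induction_on generalizing x with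
  | _ n ih =>
    by_cases hx : x = i
    · exact ⟨0, hx⟩
    · obtain ⟨k, hk⟩ := ih _ (hn ▸ hd x hx) (f x) rfl
      exact ⟨k + 1, hk⟩

lemma ReachedByAll.congr (h : ReachedByAll f i) (hfg : ∀ x ≠ i, f x = g x) :
    ReachedByAll g i := by
  refine reachedByAll_of_descent (fun x ↦ Nat.find (h x)) fun x hx ↦ ?_
  obtain ⟨k, hk⟩ := Nat.exists_eq_succ_of_ne_zero (mt (Nat.find_eq_zero (h x)).1 hx)
  have hspec := Nat.find_spec (h x)
  rw [hk, iterate_succ_apply, hfg x hx] at hspec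
  rw [hk]
  exact Nat.lt_succ_of_le (Nat.find_min' _ hspec)

lemma ReachedByAll.update [DecidableEq X] (h : ReachedByAll f i) (j : X) :
    ReachedByAll (update f i j) i :=
  h.congr fun _ hx ↦ (update_of_ne hx _ _).symm

end GlobalAttractor

section PeriodicPerm

variable {X : Type*} (f : X → X)

/-- The permutation `σ` of the attractor `A(f) = (Per(f), σ)`, extended by the identity to the
nonperiodic points, which is how a cycle `(S, σ)` is encoded by a permutation of the whole space. -/
noncomputable def periodicPerm : Equiv.Perm X :=
  Equiv.Perm.ofSubtype ((bijOn_periodicPts f).equiv f)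

variable {f}

lemma periodicPerm_apply_of_mem {x : X} (hx : x ∈ periodicPts f) : periodicPerm f x = f x :=
  Equiv.Perm.ofSubtype_apply_of_mem _ hx

lemma periodicPerm_apply_of_notMem {x : X} (hx : x ∉ periodicPts f) : periodicPerm f x = x :=
  Equiv.Perm.ofSubtype_apply_of_not_mem _ hx

lemma eq_periodicPerm_iff {σ : Equiv.Perm X} :
    σ = periodicPerm f ↔ (∀ x ∉ periodicPts f, σ x = x) ∧ ∀ x ∈ periodicPts f, f x = σ x := by
  constructor
  · rintro rfl
    exact ⟨fun x hx ↦ periodicPerm_apply_of_notMem hx,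
      fun x hx ↦ (periodicPerm_apply_of_mem hx).symm⟩
  · rintro ⟨hfix, hagree⟩
    ext x
    by_cases hx : x ∈ periodicPts f
    · rw [periodicPerm_apply_of_mem hx, hagree x hx]
    · rw [periodicPerm_apply_of_notMem hx, hfix x hx]

lemma iterate_periodicPerm_apply_of_mem {x : X} (hx : x ∈ periodicPts f) (k : ℕ) :
    (periodicPerm f)^[k] x = f^[k] x := by
  induction k with
  | zero => rfl
  | succ k ih =>
    rw [iterate_succ_apply', iterate_succ_apply', ih,
      periodicPerm_apply_of_mem ((bijOn_periodicPts f).mapsTo.iterate k hx)]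

/-- The left-hand side says that `(S, σ)` is a cycle through `i` and that `A(f) = (S, σ)`. -/
lemma cycle_and_attractor_eq_iff [Finite X] {P S : Finset X} (hP : ∀ x, x ∈ P ↔ x ∈ periodicPts f)
    {σ : Equiv.Perm X} {i : X} :
    ((S.Nonempty ∧ (∀ x ∉ S, σ x = x) ∧ (∀ x ∈ S, ∀ y ∈ S, ∃ k, σ^[k] x = y) ∧ i ∈ S) ∧
        P = S ∧ ∀ x ∈ S, f x = σ x) ↔
      P = S ∧ periodicPerm f = σ ∧ ReachedByAll f i := by
  have htrans : (∀ x ∈ periodicPts f, ∀ y ∈ periodicPts f, ∃ k, (periodicPerm f)^[k] x = y) ↔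
      ∀ x ∈ periodicPts f, ∀ y ∈ periodicPts f, ∃ k, f^[k] x = y :=
    forall₂_congr fun x hx ↦ by simp only [iterate_periodicPerm_apply_of_mem hx]
  constructor
  · rintro ⟨⟨-, hfix, hcyc, hi⟩, rfl, hagree⟩
    simp only [hP] at hfix hcyc hi hagree
    obtain rfl := eq_periodicPerm_iff.2 ⟨hfix, hagree⟩
    exact ⟨rfl, rfl, reachedByAll_iff.2 ⟨htrans.1 hcyc, hi⟩⟩
  · rintro ⟨rfl, rfl, hreach⟩
    obtain ⟨hcyc, hi⟩ := reachedByAll_iff.1 hreach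
    obtain ⟨hfix, hagree⟩ := eq_periodicPerm_iff.1 (rfl : periodicPerm f = _)
    simp only [hP]
    exact ⟨⟨⟨i, (hP i).2 hi⟩, hfix, htrans.2 hcyc, hi⟩, trivial, hagree⟩

lemma sum_cycles_sum_attractor_eq {R : Type*} [AddCommMonoid R] [Fintype X] [DecidableEq X]
    {P : (X → X) → Finset X} (hP : ∀ f x, x ∈ P f ↔ x ∈ periodicPts f) (Q : (X → X) → R) (i : X) :
    (∑ S : Finset X, ∑ σ : Equiv.Perm X,
      if S.Nonempty ∧ (∀ x ∉ S, σ x = x) ∧ (∀ x ∈ S, ∀ y ∈ S, ∃ k, σ^[k] x = y) ∧ i ∈ S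
      then ∑ f : X → X, if P f = S ∧ ∀ x ∈ S, f x = σ x then Q f else 0 else 0) =
      ∑ f with ReachedByAll f i, Q f := by
  simp only [ite_sum_zero, ← ite_and, cycle_and_attractor_eq_iff (hP _)]
  rw [sum_comm_cycle]
  simp only [ite_and, sum_ite_irrel, sum_const_zero, sum_ite_eq, mem_univ, if_true, sum_filter]

end PeriodicPerm

section TreeWeight

variable {ι R : Type*} [Fintype ι]

/-- The mass of the map `α` under the maximum entropy measure `Q` attached to `M`. -/
def mapWeight [CommSemiring R] (M : Matrix ι ι R) (α : ι → ι) : R := ∏ x, M x (α x)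

variable [DecidableEq ι]

/-- The total weight of the spanning trees rooted at `i`. A spanning tree rooted at `i` is encoded
by its parent map, with the root as its own parent. -/
noncomputable def treeWeight [CommSemiring R] (M : Matrix ι ι R) (i : ι) : R :=
  ∑ α : ι → ι with ReachedByAll α i ∧ α i = i, ∏ x ∈ univ.erase i, M x (α x)

section CommSemiring

variable [CommSemiring R] (M : Matrix ι ι R) (i j : ι)

lemma sum_mapWeight_reachedByAll_apply_eq :
    ∑ α with ReachedByAll α i ∧ α i = j, mapWeight M α = treeWeight M i * M i j := by
  rw [treeWeight, sum_mul]
  refine sum_nbij' (update · i i) (update · i j) ?_ ?_ ?_ ?_ ?_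
  · simp +contextual [ReachedByAll.update]
  · simp +contextual [ReachedByAll.update]
  · simp +contextual
  · simp +contextual
  · intro α hα
    obtain rfl : α i = j := (mem_filter.1 hα).2.2
    rw [mapWeight, ← prod_erase_mul univ _ (mem_univ i)]
    congr 1
    exact prod_congr rfl fun x hx ↦ by rw [update_of_ne (ne_of_mem_erase hx)]

lemma sum_mapWeight_reachedByAll :
    ∑ α with ReachedByAll α i, mapWeight M α = treeWeight M i * ∑ j, M i j := by
  rw [← sum_fiberwise _ fun α ↦ α i, mul_sum]
  simp only [filter_filter, sum_mapWeight_reachedByAll_apply_eq]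

/-- The Markov chain tree theorem, for rows of arbitrary sums. -/
lemma sum_treeWeight_mul : ∑ i, treeWeight M i * M i j = treeWeight M j * ∑ k, M j k := by
  simp only [← sum_mapWeight_reachedByAll, ← sum_mapWeight_reachedByAll_apply_eq, sum_filter]
  rw [sum_comm]
  refine sum_congr rfl fun α _ ↦ ?_
  by_cases hj : ReachedByAll α j
  · obtain ⟨i, hi, huniq⟩ := reachedByAll_iff_existsUnique_apply_eq.1 hj
    rw [if_pos hj, Fintype.sum_eq_single i fun k hk ↦ if_neg (hk ∘ huniq k), if_pos hi]
  · rw [if_neg hj]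
    refine sum_eq_zero fun i _ ↦ if_neg ?_
    rintro ⟨hi, rfl⟩
    exact hj (hi.iterate 1)

variable {M} in
lemma treeWeight_vecMul (hM : ∀ i, ∑ j, M i j = 1) : treeWeight M ᵥ* M = treeWeight M := by
  ext j
  rw [Matrix.vecMul_eq_sum]
  simp [sum_treeWeight_mul, hM]

lemma treeWeight_updateRow (r : ι → R) : treeWeight (M.updateRow i r) i = treeWeight M i :=
  sum_congr rfl fun α _ ↦ prod_congr rfl fun x hx ↦ by
    rw [Matrix.updateRow_ne (ne_of_mem_erase hx)]

end CommSemiring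

section Ordered

variable [CommSemiring R] [LinearOrder R] [IsStrictOrderedRing R] {M : Matrix ι ι R} {i : ι}

lemma exists_tree_of_pow_pos (hM0 : ∀ i j, 0 ≤ M i j) (hreach : ∀ x, ∃ k, 0 < (M ^ k) x i) :
    ∃ α : ι → ι, (ReachedByAll α i ∧ α i = i) ∧ ∀ x ≠ i, 0 < M x (α x) := by
  let d x := Nat.find (hreach x)
  have hstep : ∀ x ≠ i, ∃ y, 0 < M x y ∧ d y < d x := by
    intro x hx
    have hdx : 0 < (M ^ d x) x i := Nat.find_spec (hreach x)
    cases hd : d x with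
    | zero => simp [hd, Matrix.one_apply_ne hx] at hdx
    | succ k =>
      rw [hd, pow_succ', Matrix.mul_apply] at hdx
      obtain ⟨y, -, hy⟩ : ∃ y ∈ univ, 0 < M x y * (M ^ k) y i :=
        exists_lt_of_sum_lt (by simpa using hdx)
      exact ⟨y, pos_of_mul_pos_left hy (Matrix.pow_apply_nonneg hM0 k y i),
        Nat.lt_succ_of_le (Nat.find_min' _ (pos_of_mul_pos_right hy (hM0 x y)))⟩
  choose! α hpos hlt using hstep
  have hne : ∀ x ≠ i, update α i i x = α x := fun x hx ↦ update_of_ne hx _ _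
  refine ⟨update α i i, ⟨reachedByAll_of_descent d fun x hx ↦ ?_, update_self ..⟩, fun x hx ↦ ?_⟩
  · rw [hne x hx]; exact hlt x hx
  · rw [hne x hx]; exact hpos x hx

lemma treeWeight_pos (hM0 : ∀ i j, 0 ≤ M i j) (hreach : ∀ x, ∃ k, 0 < (M ^ k) x i) :
    0 < treeWeight M i := by
  obtain ⟨α, hα, hpos⟩ := exists_tree_of_pow_pos hM0 hreach
  exact sum_pos' (fun _ _ ↦ prod_nonneg fun _ _ ↦ hM0 _ _)
    ⟨α, by simpa using hα, prod_pos fun x hx ↦ hpos x (ne_of_mem_erase hx)⟩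

end Ordered

end TreeWeight

section Stationary

variable {ι R : Type*} [Fintype ι] [CommRing R]

lemma treeWeight_mul_eq_of_mulVec_eq [DecidableEq ι] {M : Matrix ι ι R}
    (hM : ∀ i, ∑ j, M i j = 1) {h : ι → R} (hh : M *ᵥ h = h) (i j : ι) :
    treeWeight M i * h j = treeWeight M i * h i := by
  set N : Matrix ι ι R := M.updateRow i (Pi.single j 1) with hN
  have hN1 : ∀ k, ∑ l, N k l = 1 := by
    intro k
    obtain rfl | hk := eq_or_ne k i
    · simp [hN]
    · simp [hN, Matrix.updateRow_ne hk, hM]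
  have hNh : N *ᵥ h = h + Pi.single i (h j - h i) := by
    ext k
    obtain rfl | hk := eq_or_ne k i
    · simp [hN, Matrix.mulVec]
    · simpa [hN, Matrix.mulVec, Matrix.updateRow_ne hk, hk] using congrFun hh k
  have hpair : treeWeight N ⬝ᵥ (N *ᵥ h) = treeWeight N ⬝ᵥ h := by
    rw [Matrix.dotProduct_mulVec, treeWeight_vecMul hN1]
  rw [hNh, dotProduct_add, add_eq_left, dotProduct_single, hN, treeWeight_updateRow,
    mul_sub] at hpair
  exact sub_eq_zero.1 hpair

lemma vecMul_one_sub_add_vecMulVec_one [DecidableEq ι] {M : Matrix ι ι R} {v : ι → R}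
    (hv : v ᵥ* M = v) (π : ι → R) : v ᵥ* (1 - M + Matrix.vecMulVec 1 π) = (∑ i, v i) • π := by
  rw [Matrix.vecMul_add, Matrix.vecMul_sub, Matrix.vecMul_one, hv, sub_self, zero_add,
    Matrix.vecMul_vecMulVec, dotProduct_one]

/-- Adding `1 π` to `1 - M` takes the constants out of its kernel. Its determinant then turns the
uniqueness of harmonic functions (right kernel) into that of stationary vectors (left kernel). -/
lemma det_one_sub_add_vecMulVec_one_ne_zero [DecidableEq ι] [IsDomain R] {M : Matrix ι ι R}
    (hM : ∀ h : ι → R, M *ᵥ h = h → ∀ i j, h i = h j) {π : ι → R}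
    (hπ : π ᵥ* M = π) (hπ1 : ∑ i, π i = 1) : (1 - M + Matrix.vecMulVec 1 π).det ≠ 0 := by
  rw [Ne, ← Matrix.exists_mulVec_eq_zero_iff]
  rintro ⟨h, hne, hBh⟩
  have hπh : π ⬝ᵥ h = 0 := by
    have hπB := vecMul_one_sub_add_vecMulVec_one hπ π
    rw [hπ1, one_smul] at hπB
    rw [← hπB, ← Matrix.dotProduct_mulVec, hBh, dotProduct_zero]
  have hharm : M *ᵥ h = h := by
    rw [Matrix.add_mulVec, Matrix.vecMulVec_mulVec, hπh, MulOpposite.op_zero, zero_smul, add_zero,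
      Matrix.sub_mulVec, Matrix.one_mulVec] at hBh
    exact (sub_eq_zero.1 hBh).symm
  refine hne (funext fun i ↦ ?_)
  calc h i = (∑ j, π j) * h i := by rw [hπ1, one_mul]
    _ = π ⬝ᵥ h := by rw [sum_mul]; exact sum_congr rfl fun j _ ↦ by rw [hM h hharm i j]
    _ = 0 := hπh

lemma eq_sum_smul_of_vecMul_eq [IsDomain R] {M : Matrix ι ι R}
    (hM : ∀ h : ι → R, M *ᵥ h = h → ∀ i j, h i = h j) {π v : ι → R}
    (hπ : π ᵥ* M = π) (hπ1 : ∑ i, π i = 1) (hv : v ᵥ* M = v) : v = (∑ i, v i) • π := by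
  refine sub_eq_zero.1
    (Matrix.eq_zero_of_vecMul_eq_zero (det_one_sub_add_vecMulVec_one_ne_zero hM hπ hπ1) ?_)
  rw [Matrix.sub_vecMul, Matrix.smul_vecMul, vecMul_one_sub_add_vecMulVec_one hv,
    vecMul_one_sub_add_vecMulVec_one hπ, hπ1, one_smul, sub_self]

lemma treeWeight_eq_sum_smul [DecidableEq ι] [IsDomain R] {M : Matrix ι ι R}
    (hM : ∀ i, ∑ j, M i j = 1) {π : ι → R} (hπ : π ᵥ* M = π) (hπ1 : ∑ i, π i = 1) :
    treeWeight M = (∑ i, treeWeight M i) • π := by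
  by_cases hT : ∃ i, treeWeight M i ≠ 0
  · obtain ⟨i, hi⟩ := hT
    have hconst : ∀ h : ι → R, M *ᵥ h = h → ∀ j, h j = h i := fun h hh j ↦
      mul_left_cancel₀ hi (treeWeight_mul_eq_of_mulVec_eq hM hh i j)
    exact eq_sum_smul_of_vecMul_eq
      (fun h hh j k ↦ (hconst h hh j).trans (hconst h hh k).symm) hπ hπ1 (treeWeight_vecMul hM)
  · push Not at hT
    ext i
    simp [hT]

end Stationary

theorem cycle_weights_give_stationary_distribution_general {ι K : Type*} [Fintype ι]
    [DecidableEq ι] [Field K] (M : Matrix ι ι K) (hM1 : ∀ i, ∑ j, M i j = 1)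
    (π : ι → K) (hπ1 : ∑ i, π i = 1) (hπstat : ∀ j, ∑ i, π i * M i j = π j)
    (Q : (ι → ι) → K) (hQ : ∀ α, Q α = ∏ i, M i (α i))
    (Per : (ι → ι) → Finset ι)
    (hPer : ∀ α, Per α = Finset.univ.filter fun x => ∃ k, 1 ≤ k ∧ α^[k] x = x)
    (single : (ι → ι) → Prop)
    (hsingle : ∀ α, single α ↔ ∀ x ∈ Per α, ∀ y ∈ Per α, ∃ k, α^[k] x = y)
    (normA : (ι → ι) → K)
    (hnormA : ∀ α, normA α = if single α then ((Per α).card : K) else 0)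
    (EQ : K) (hEQ : EQ = ∑ α : ι → ι, Q α * normA α)
    (wc : Finset ι → Equiv.Perm ι → K)
    (hwc : ∀ S σ, wc S σ =
      (∑ α : ι → ι, if (Per α = S ∧ ∀ x ∈ S, α x = σ x) then Q α else 0) / EQ)
    (i : ι) :
    EQ = ∑ x, treeWeight M x ∧
    (EQ ≠ 0 → (∑ S : Finset ι, ∑ σ : Equiv.Perm ι,
      if (S.Nonempty ∧ (∀ x ∉ S, σ x = x) ∧
          (∀ x ∈ S, ∀ y ∈ S, ∃ k, (⇑σ)^[k] x = y) ∧ i ∈ S)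
        then wc S σ else 0) = π i) ∧
    (∑ α : ι → ι, if (single α ∧ i ∈ Per α) then Q α else 0) = π i * EQ := by
  have hmem : ∀ α x, x ∈ Per α ↔ x ∈ periodicPts α := fun α x ↦ by
    rw [hPer, mem_filter_univ]; rfl
  have hreach : ∀ α x, single α ∧ x ∈ Per α ↔ ReachedByAll α x := fun α x ↦ by
    simp only [reachedByAll_iff, hsingle, hmem]
  have hnorm : ∀ α, normA α = ∑ x, if ReachedByAll α x then 1 else 0 := fun α ↦ by
    by_cases hα : single α <;> simp [hnormA, ← hreach, hα]
  have hattr : ∀ x, ∑ α with ReachedByAll α x, Q α = treeWeight M x := fun x ↦ by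
    rw [← mul_one (treeWeight M x), ← hM1 x, ← sum_mapWeight_reachedByAll]
    exact sum_congr rfl fun α _ ↦ hQ α
  have hEQtree : EQ = ∑ x, treeWeight M x := by
    simp only [hEQ, hnorm, mul_sum, mul_ite, mul_one, mul_zero]
    rw [sum_comm]
    simp only [← sum_filter, hattr]
  have hπtree : treeWeight M i = π i * EQ := by
    rw [hEQtree, mul_comm]
    exact congrFun (treeWeight_eq_sum_smul hM1 (funext hπstat) hπ1) i
  refine ⟨hEQtree, fun hEQ0 ↦ ?_, ?_⟩
  · refine mul_right_cancel₀ hEQ0 ?_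
    simp only [hwc, sum_mul, ite_mul, zero_mul, div_mul_cancel₀ _ hEQ0]
    rw [sum_cycles_sum_attractor_eq hmem, hattr, hπtree]
  · simp only [hreach, ← sum_filter, hattr, hπtree]

/-- Cycle weights recover the stationary distribution: for every state i,
Σ_{cycles c = (S,σ), i ∈ S} w_c = π_i, where w_c = Q(α : A(α)=c)/E_Q[‖A(α)‖];
equivalently Q(α single attractor ∧ i ∈ Per α) = π_i · E_Q[‖A(α)‖]. -/
theorem cycle_weights_give_stationary_distribution (n : ℕ)
    (M : Matrix (Fin n) (Fin n) ℝ)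
    (hM0 : ∀ i j, 0 ≤ M i j) (hM1 : ∀ i, ∑ j, M i j = 1)
    (hirr : ∀ i j, ∃ k, 1 ≤ k ∧ 0 < (M ^ k) i j)
    (π : Fin n → ℝ) (hπ0 : ∀ i, 0 ≤ π i) (hπ1 : ∑ i, π i = 1)
    (hπstat : ∀ j, ∑ i, π i * M i j = π j)
    (Q : (Fin n → Fin n) → ℝ) (hQ : ∀ α, Q α = ∏ i, M i (α i))
    (Per : (Fin n → Fin n) → Finset (Fin n))
    (hPer : ∀ α, Per α = Finset.univ.filter fun x => ∃ k, 1 ≤ k ∧ α^[k] x = x)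
    (single : (Fin n → Fin n) → Prop)
    (hsingle : ∀ α, single α ↔ ∀ x ∈ Per α, ∀ y ∈ Per α, ∃ k, α^[k] x = y)
    (normA : (Fin n → Fin n) → ℝ)
    (hnormA : ∀ α, normA α = if single α then ((Per α).card : ℝ) else 0)
    (EQ : ℝ) (hEQ : EQ = ∑ α : Fin n → Fin n, Q α * normA α)
    (wc : Finset (Fin n) → Equiv.Perm (Fin n) → ℝ)
    (hwc : ∀ S σ, wc S σ =
      (∑ α : Fin n → Fin n, if (Per α = S ∧ ∀ x ∈ S, α x = σ x) then Q α else 0) / EQ)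
    (i : Fin n) :
    (∑ S : Finset (Fin n), ∑ σ : Equiv.Perm (Fin n),
      if (S.Nonempty ∧ (∀ x ∉ S, σ x = x) ∧
          (∀ x ∈ S, ∀ y ∈ S, ∃ k, (⇑σ)^[k] x = y) ∧ i ∈ S)
        then wc S σ else 0) = π i ∧
    (∑ α : Fin n → Fin n, if (single α ∧ i ∈ Per α) then Q α else 0) = π i * EQ := by
  obtain ⟨hEQtree, hcycles, hattr⟩ := cycle_weights_give_stationary_distribution_general
    M hM1 π hπ1 hπstat Q hQ Per hPer single hsingle normA hnormA EQ hEQ wc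
    (fun S σ ↦ by convert hwc S σ) i
  have hpos : 0 < ∑ x, treeWeight M x :=
    sum_pos (fun x _ ↦ treeWeight_pos hM0 fun y ↦ (hirr y x).imp fun _ ↦ And.right)
      ⟨i, mem_univ i⟩
  exact ⟨by convert hcycles (hEQtree ▸ hpos.ne'), hattr⟩
end
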